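/- arXiv:1901.10472 — 3 statements merged into one kernel-verified Lean document; each statement's English description precedes it below -/
import Mathlib

section
/- Let 𝒲 be a finite set of affine planes in ℝ³ (the walls), let L ∈ ℝ³ with L ∉ W for every W ∈ 𝒲, and for W ∈ 𝒲 let s_W := ref_W(L). Then the set of microphone configurations (m₁, m₂, m₃, m₄) ∈ (ℝ³)⁴ ≅ ℝ¹² for which there exist walls W₁, W₂, W₃, W₄ ∈ 𝒲, not all equal, with f_M(‖s_{W₁} − m₁‖², ‖s_{W₂} − m₂‖², ‖s_{W₃} − m₃‖², ‖s_{W₄} − m₄‖²) = 0 (f_M being formed from the pairwise squared distances of the m_i) has Lebesgue measure zero in ℝ¹². -/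
open MeasureTheory
open scoped RealInnerProductSpace

noncomputable section

abbrev E3 := EuclideanSpace ℝ (Fin 3)

open scoped Classical in
/-- The reflection (mirror image) of a point across an affine subspace of ℝ³,
as a total function. -/
def reflAff (W : AffineSubspace ℝ E3) (L : E3) : E3 :=
  if h : Nonempty W then
    haveI := h
    EuclideanGeometry.reflection W L
  else L

/-- `W` is an affine plane in ℝ³. -/
def IsPlane (W : AffineSubspace ℝ E3) : Prop :=
  (W : Set E3).Nonempty ∧ Module.finrank ℝ W.direction = 2

/-- The polynomial `f_M` given by the Cayley–Menger-type determinant formed from the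
pairwise squared distances `D i j = ‖m i - m j‖²` between the four microphones. -/
def fM (m : Fin 4 → E3) (u : Fin 4 → ℝ) : ℝ :=
  let d : Fin 4 → Fin 4 → ℝ := fun i j => ‖m i - m j‖ ^ 2
  Matrix.det !![0,   u 0,   u 1,   u 2,   u 3,   1;
                u 0, d 0 0, d 0 1, d 0 2, d 0 3, 1;
                u 1, d 1 0, d 1 1, d 1 2, d 1 3, 1;
                u 2, d 2 0, d 2 1, d 2 2, d 2 3, 1;
                u 3, d 3 0, d 3 1, d 3 2, d 3 3, 1;
                1,   1,     1,     1,     1,     0]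

/-!
A plane `W` missing `L` is the perpendicular bisector of `L` and its mirror image, so walls that are
not all equal give mirror points `s i` that are not all equal. For a fixed such `s`,
`m ↦ fM m (‖s i - m i‖²)` is real analytic, so its zero set is null as soon as the function is not
identically zero: on each line through a point where it does not vanish it has only countably many
zeros, and Fubini over directions and scales concludes.

A nonzero value is found among orthonormal corners at `s 0`, that is, configurations
`m = (s 0, s 0 + e₀, s 0 + e₁, s 0 + e₂)` with `e` orthonormal. There the determinant is
`4 * ∑ i, (‖s (i + 1) - s 0 - e i‖² - 1)²`; if it vanished for both `e` and `-e`, the parallelogram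
law would force `s (i + 1) = s 0` for every `i`.
-/

open scoped ContDiff

section AnalyticZeroSet

theorem ae_ne_zero_of_analyticOnNhd_field {𝕜 F : Type*} [NontriviallyNormedField 𝕜]
    [ConnectedSpace 𝕜] [SecondCountableTopology 𝕜] [MeasurableSpace 𝕜] [NormedAddCommGroup F]
    [NormedSpace 𝕜 F] (μ : Measure 𝕜) [NullSingletonClass μ] {g : 𝕜 → F}
    (hg : AnalyticOnNhd 𝕜 g Set.univ) {t₀ : 𝕜} (ht₀ : g t₀ ≠ 0) : ∀ᵐ t ∂μ, g t ≠ 0 := by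
  have hae := ae_restrict_le_codiscreteWithin (μ := μ) MeasurableSet.univ
    (hg.preimage_zero_mem_codiscrete ht₀)
  rwa [Measure.restrict_univ] at hae

variable {E : Type*} [NormedAddCommGroup E] [NormedSpace ℝ E] [FiniteDimensional ℝ E]
  [MeasurableSpace E] [BorelSpace E] (μ : Measure E) [μ.IsAddHaarMeasure]

theorem ae_of_ae_add_smul {p : E → Prop} (x₀ : E) {t : ℝ} (ht : t ≠ 0)
    (h : ∀ᵐ v ∂μ, p (x₀ + t • v)) : ∀ᵐ x ∂μ, p x := by
  have hp : ∀ᵐ w ∂μ, p (x₀ + w) := by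
    filter_upwards [(Measure.quasiMeasurePreserving_smul μ (inv_ne_zero ht)).ae h] with w hw
    rwa [smul_inv_smul₀ ht] at hw
  filter_upwards [(measurePreserving_add_left μ (-x₀)).quasiMeasurePreserving.ae hp] with x hx
  rwa [add_neg_cancel_left] at hx

theorem ae_ne_zero_of_analyticOnNhd {F : Type*} [NormedAddCommGroup F] [NormedSpace ℝ F]
    {f : E → F} (hf : AnalyticOnNhd ℝ f Set.univ) {x₀ : E} (hx₀ : f x₀ ≠ 0) :
    ∀ᵐ x ∂μ, f x ≠ 0 := by
  have hline (v : E) : ∀ᵐ t : ℝ, f (x₀ + t • v) ≠ 0 := by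
    have hg : AnalyticOnNhd ℝ (fun t : ℝ ↦ f (x₀ + t • v)) Set.univ := fun t _ ↦
      (hf _ (Set.mem_univ _)).comp (by fun_prop)
    exact ae_ne_zero_of_analyticOnNhd_field volume hg (t₀ := 0) (by simpa using hx₀)
  have hmeas : MeasurableSet {q : E × ℝ | f (x₀ + q.2 • q.1) ≠ 0} := by
    have hcont : Continuous f := continuousOn_univ.mp hf.continuousOn
    exact (isOpen_ne_fun (by fun_prop) continuous_const).measurableSet
  have hscaled : ∀ᵐ t : ℝ, ∀ᵐ v ∂μ, f (x₀ + t • v) ≠ 0 :=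
    (Measure.ae_ae_comm hmeas).mp (.of_forall hline)
  obtain ⟨t, ht, ht₀⟩ := (hscaled.and (Measure.ae_ne volume 0)).exists
  exact ae_of_ae_add_smul μ x₀ ht₀ ht

end AnalyticZeroSet

section PerpBisector

open AffineSubspace EuclideanGeometry

variable {V P : Type*} [NormedAddCommGroup V] [InnerProductSpace ℝ V] [FiniteDimensional ℝ V]
  [MetricSpace P] [NormedAddTorsor V P]

theorem finrank_direction_perpBisector_add_one {p q : P} (hpq : p ≠ q) :
    Module.finrank ℝ (perpBisector p q).direction + 1 = Module.finrank ℝ V := by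
  have hsum := Submodule.finrank_add_finrank_orthogonal (ℝ ∙ (q -ᵥ p))
  rw [finrank_span_singleton (vsub_ne_zero.mpr hpq.symm)] at hsum
  rw [direction_perpBisector, add_comm, hsum]

theorem perpBisector_reflection_eq {W : AffineSubspace ℝ P} [Nonempty W]
    (hW : Module.finrank ℝ W.direction + 1 = Module.finrank ℝ V) {p : P} (hp : p ∉ W) :
    perpBisector p (reflection W p) = W := by
  have hle : W ≤ perpBisector p (reflection W p) := fun x hx ↦
    mem_perpBisector_iff_dist_eq.mpr (dist_reflection_eq_of_mem W hx p).symm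
  have hne : p ≠ reflection W p := fun h ↦ hp ((reflection_eq_self_iff p).mp h.symm)
  have hfinrank :
      Module.finrank ℝ W.direction = Module.finrank ℝ (perpBisector p (reflection W p)).direction :=
    Nat.succ_injective (hW.trans (finrank_direction_perpBisector_add_one hne).symm)
  have hdir : W.direction = (perpBisector p (reflection W p)).direction :=
    Submodule.eq_of_le_of_finrank_eq (direction_le hle) hfinrank
  exact (eq_of_direction_eq_of_nonempty_of_le hdir Set.Nonempty.of_subtype hle).symm

end PerpBisector

theorem perpBisector_reflAff_eq {W : AffineSubspace ℝ E3} (hW : IsPlane W) {L : E3} (hL : L ∉ W) :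
    AffineSubspace.perpBisector L (reflAff W L) = W := by
  have : Nonempty W := hW.1.to_subtype
  rw [reflAff, dif_pos this]
  exact perpBisector_reflection_eq (by rw [hW.2, finrank_euclideanSpace_fin]) hL

theorem injOn_reflAff (L : E3) : Set.InjOn (reflAff · L) {W | IsPlane W ∧ L ∉ W} :=
  fun W₁ h₁ W₂ h₂ h ↦ by
    rw [← perpBisector_reflAff_eq h₁.1 h₁.2, ← perpBisector_reflAff_eq h₂.1 h₂.2]
    exact congrArg _ h

theorem contDiff_matrix_det {𝕜 E A n : Type*} [NontriviallyNormedField 𝕜] [NormedAddCommGroup E]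
    [NormedSpace 𝕜 E] [NormedCommRing A] [NormedAlgebra 𝕜 A] [Fintype n] [DecidableEq n] {k : ℕ∞ω}
    {M : E → Matrix n n A} (hM : ∀ i j, ContDiff 𝕜 k fun x ↦ M x i j) :
    ContDiff 𝕜 k fun x ↦ (M x).det := by
  simp only [Matrix.det_apply']
  fun_prop

theorem contDiff_fM {k : ℕ∞ω} (s : Fin 4 → E3) :
    ContDiff ℝ k fun m : Fin 4 → E3 ↦ fM m fun i ↦ ‖s i - m i‖ ^ 2 := by
  have hsource (i : Fin 4) : ContDiff ℝ k fun m : Fin 4 → E3 ↦ ‖s i - m i‖ ^ 2 :=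
    ContDiff.norm_sq ℝ (by fun_prop)
  have hpair (i j : Fin 4) : ContDiff ℝ k fun m : Fin 4 → E3 ↦ ‖m i - m j‖ ^ 2 :=
    ContDiff.norm_sq ℝ (by fun_prop)
  unfold fM
  refine contDiff_matrix_det ?_
  simp [Fin.forall_fin_succ, contDiff_const, hsource, hpair]

/-- The base point `p` together with its translates by the vectors `e i`; index `0` is the base
point. For orthonormal `e` this is an orthonormal corner, the configuration of microphones at which
`fM` is evaluated explicitly. -/
def corner {V : Type*} [AddCommGroup V] {n : ℕ} (p : V) (e : Fin n → V) : Fin (n + 1) → V :=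
  Fin.cons p fun i ↦ p + e i

section InnerProductSpace

variable {V : Type*} [NormedAddCommGroup V] [InnerProductSpace ℝ V]

theorem norm_sub_sq_of_orthonormal {ι : Type*} {e : ι → V} (he : Orthonormal ℝ e) {i j : ι}
    (hij : i ≠ j) : ‖e i - e j‖ ^ 2 = 2 := by
  rw [norm_sub_sq_real, he.norm_eq_one, he.norm_eq_one, he.inner_eq_zero hij]
  norm_num

theorem norm_corner_sub_corner_sq {n : ℕ} (p : V) {e : Fin n → V} (he : Orthonormal ℝ e)
    (i j : Fin (n + 1)) : ‖corner p e i - corner p e j‖ ^ 2 =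
      if i = j then 0 else if i = 0 ∨ j = 0 then 1 else 2 := by
  rcases eq_or_ne i j with rfl | hij
  · simp
  cases i using Fin.cases with
  | zero => cases j using Fin.cases <;> simp_all [corner, he.norm_eq_one]
  | succ i =>
    cases j using Fin.cases with
    | zero => simp [corner, he.norm_eq_one]
    | succ j =>
      have hij' : i ≠ j := fun h ↦ hij (congrArg Fin.succ h)
      simp [corner, hij', norm_sub_sq_of_orthonormal he hij']

theorem eq_zero_of_norm_add_eq_of_norm_sub_eq {x y : V} (hadd : ‖x + y‖ = ‖y‖)
    (hsub : ‖x - y‖ = ‖y‖) : x = 0 := by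
  have hlaw := parallelogram_law_with_norm ℝ x y
  rw [hadd, hsub] at hlaw
  have hx : ‖x‖ * ‖x‖ = 0 := by linarith
  exact norm_eq_zero.mp (mul_self_eq_zero.mp hx)

end InnerProductSpace

theorem det_bordered_corner {R : Type*} [CommRing R] (u : Fin 4 → R) :
    Matrix.det !![0,   u 0, u 1, u 2, u 3, 1;
                  u 0, 0,   1,   1,   1,   1;
                  u 1, 1,   0,   2,   2,   1;
                  u 2, 1,   2,   0,   2,   1;
                  u 3, 1,   2,   2,   0,   1;
                  1,   1,   1,   1,   1,   0] =
      4 * (∑ i : Fin 3, (u i.succ - u 0 - 1) ^ 2 - 4 * u 0) := by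
  simp only [Matrix.det_succ_row_zero, Matrix.det_unique, Matrix.submatrix_apply, Matrix.of_apply,
    Matrix.cons_val, Fin.sum_univ_succ, Fin.succAbove, Finset.univ_unique,
    Finset.sum_singleton, Fin.default_eq_zero, Fin.reduceCastSucc, Fin.reduceSucc, Fin.reduceLT,
    Fin.coe_ofNat_eq_mod, ↓reduceIte]
  ring

theorem fM_corner (p : E3) {e : Fin 3 → E3} (he : Orthonormal ℝ e) (u : Fin 4 → ℝ) :
    fM (corner p e) u = 4 * (∑ i : Fin 3, (u i.succ - u 0 - 1) ^ 2 - 4 * u 0) := by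
  rw [← det_bordered_corner]
  simp [fM, norm_corner_sub_corner_sq p he]

theorem norm_sub_eq_one_of_fM_corner_eq_zero {s : Fin 4 → E3} {e : Fin 3 → E3}
    (he : Orthonormal ℝ e)
    (h : fM (corner (s 0) e) (fun i ↦ ‖s i - corner (s 0) e i‖ ^ 2) = 0) (i : Fin 3) :
    ‖s i.succ - s 0 - e i‖ = 1 := by
  have hsum : ∑ i : Fin 3, (‖s i.succ - s 0 - e i‖ ^ 2 - 1) ^ 2 = 0 := by
    rw [fM_corner _ he] at h
    simpa [corner, sub_sub] using h
  have hi : ‖s i.succ - s 0 - e i‖ ^ 2 - 1 = 0 := pow_eq_zero_iff two_ne_zero |>.mp <|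
    (Finset.sum_eq_zero_iff_of_nonneg fun _ _ ↦ sq_nonneg _).mp hsum i (Finset.mem_univ i)
  exact (pow_eq_one_iff_of_nonneg (norm_nonneg _) two_ne_zero).mp (sub_eq_zero.mp hi)

theorem exists_fM_ne_zero {s : Fin 4 → E3} (hs : ¬ ∀ i j, s i = s j) :
    ∃ m : Fin 4 → E3, fM m (fun i ↦ ‖s i - m i‖ ^ 2) ≠ 0 := by
  by_contra! hzero
  have he := (EuclideanSpace.basisFun (Fin 3) ℝ).orthonormal
  have he_neg := he.comp_linearIsometryEquiv (LinearIsometryEquiv.neg ℝ)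
  have hsucc (i : Fin 3) : s i.succ = s 0 := by
    have hsub := norm_sub_eq_one_of_fM_corner_eq_zero he (hzero _) i
    have hadd := norm_sub_eq_one_of_fM_corner_eq_zero he_neg (hzero _) i
    simp only [Function.comp_apply, LinearIsometryEquiv.coe_neg, sub_neg_eq_add] at hadd
    rw [← he.norm_eq_one i] at hsub hadd
    exact sub_eq_zero.mp (eq_zero_of_norm_add_eq_of_norm_sub_eq hadd hsub)
  have hall (i : Fin 4) : s i = s 0 := Fin.cases rfl hsucc i
  exact hs fun i j ↦ (hall i).trans (hall j).symm

theorem ae_fM_ne_zero {s : Fin 4 → E3} (hs : ¬ ∀ i j, s i = s j) :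
    ∀ᵐ m : Fin 4 → E3, fM m (fun i ↦ ‖s i - m i‖ ^ 2) ≠ 0 :=
  let ⟨_, hm₀⟩ := exists_fM_ne_zero hs
  ae_ne_zero_of_analyticOnNhd volume (contDiff_fM s).analyticOnNhd hm₀

theorem bad_microphone_configurations_measure_zero_general
    {𝒲 : Set (AffineSubspace ℝ E3)} (hcount : 𝒲.Countable) (hplane : ∀ W ∈ 𝒲, IsPlane W)
    {L : E3} (hL : ∀ W ∈ 𝒲, L ∉ W) :
    volume {m : Fin 4 → E3 |
      ∃ W : Fin 4 → AffineSubspace ℝ E3, (∀ i, W i ∈ 𝒲) ∧ (¬ ∀ i j, W i = W j) ∧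
        fM m (fun i => ‖reflAff (W i) L - m i‖ ^ 2) = 0} = 0 := by
  let bad : Set (Fin 4 → AffineSubspace ℝ E3) := {W | (∀ i, W i ∈ 𝒲) ∧ ¬ ∀ i j, W i = W j}
  have hbad : bad.Countable := (Set.countable_pi fun _ ↦ hcount).mono fun _ hW ↦ hW.1
  have hae : ∀ᵐ m : Fin 4 → E3, ∀ W ∈ bad, fM m (fun i ↦ ‖reflAff (W i) L - m i‖ ^ 2) ≠ 0 := by
    refine (ae_ball_iff hbad).mpr fun W ⟨hW, hne⟩ ↦ ae_fM_ne_zero fun hs ↦ hne fun i j ↦ ?_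
    exact injOn_reflAff L ⟨hplane _ (hW i), hL _ (hW i)⟩ ⟨hplane _ (hW j), hL _ (hW j)⟩ (hs i j)
  refine measure_mono_null ?_ hae
  rintro m ⟨W, hW, hne, hzero⟩ hm
  exact hm W ⟨hW, hne⟩ hzero

/-- Corollary (independently placed microphones): for a finite set of walls and a
loudspeaker `L` not on any wall, the set of microphone configurations
`(m₁,…,m₄) ∈ (ℝ³)⁴ ≅ ℝ¹²` for which the echo sorting criterion vanishes for some walls
that are not all equal has Lebesgue measure zero. -/
theorem bad_microphone_configurations_measure_zero
    (𝒲 : Set (AffineSubspace ℝ E3)) (hfin : 𝒲.Finite) (hplane : ∀ W ∈ 𝒲, IsPlane W)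
    (L : E3) (hL : ∀ W ∈ 𝒲, L ∉ W) :
    volume {m : Fin 4 → E3 |
      ∃ W : Fin 4 → AffineSubspace ℝ E3, (∀ i, W i ∈ 𝒲) ∧ (¬ ∀ i j, W i = W j) ∧
        fM m (fun i => ‖reflAff (W i) L - m i‖ ^ 2) = 0} = 0 := by
  exact bad_microphone_configurations_measure_zero_general hfin.countable hplane hL

end
end

section
/- Let 𝒲 be a finite set of affine planes in ℝ³ (the walls), let m₁^ini,…,m₄^ini ∈ ℝ³ be non-coplanar points, and let L_ini ∈ ℝ³. Then the set of pairs (t, R) ∈ ℝ³ × SO(3) for which there exist walls W₁, W₂, W₃, W₄ ∈ 𝒲, not all equal, with f_M(‖ref_{W₁}(L) − m₁‖², ‖ref_{W₂}(L) − m₂‖², ‖ref_{W₃}(L) − m₃‖², ‖ref_{W₄}(L) − m₄‖²) = 0 (where m_i := R m_i^ini + t and L := R L_ini + t) has measure zero with respect to the product of the Lebesgue measure on ℝ³ and the Haar probability measure on SO(3). -/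
open MeasureTheory
open scoped RealInnerProductSpace

noncomputable section

instance : MeasurableSpace (Matrix (Fin 3) (Fin 3) ℝ) :=
  inferInstanceAs (MeasurableSpace (Fin 3 → Fin 3 → ℝ))

/-!
Let `hᵢ` be the signed distance from the wall `Wᵢ`, with unit normal `nᵢ`. If `f_M` vanishes then
its bordered distance matrix has a kernel vector, which encodes a point at the prescribed distances
from the microphones, that is, a vector `y` with `⟪y, mᵢ - L⟫ + ‖y‖ ^ 2 = hᵢ(L) * hᵢ(mᵢ)` for all
`i`. For fixed `R` the criterion is analytic in `t`, so it vanishes on a null set or identically.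

In the latter case translate by `s • d`. The right-hand side becomes quadratic in `s`, and so do the
gradient and the constant term of its affine interpolant on the simplex of microphones, which are
`y` and `‖y‖ ^ 2`. Comparing degrees, the leading coefficient `⟪nᵢ, d⟫ ^ 2` is independent of `i`;
hence all walls are parallel, `Wᵢ = {x | ⟪n, x⟫ = cᵢ}`. Taking `d = n`, the gradient `R g` of the
interpolant of `c` satisfies `⟪n, R g⟫ = ‖g‖ ^ 2`. Since the walls are not all equal, `g ≠ 0`, and
`R g` lies on a given plane only for a null set of rotations.
-/

open Module
open scoped ContDiff

section NullSets

variable {α β : Type*} [MeasurableSpace α] [MeasurableSpace β]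

theorem measure_prod_null_of_ae_null_right {μ : Measure α} {ν : Measure β} [SFinite μ] [SFinite ν]
    {s : Set (α × β)} (hs : MeasurableSet s) (h : ∀ᵐ y ∂ν, μ {x | (x, y) ∈ s} = 0) :
    μ.prod ν s = 0 := by
  rw [Measure.prod_apply_symm hs, lintegral_eq_zero_iff (measurable_measure_prodMk_right hs)]
  exact h

variable {E F : Type*} [NormedAddCommGroup E] [NormedSpace ℝ E] [NormedAddCommGroup F]
  [NormedSpace ℝ F]

theorem volume_zeroSet_eq_zero_of_analyticOnNhd_real {f : ℝ → F}
    (hf : AnalyticOnNhd ℝ f Set.univ) {s₀ : ℝ} (hs₀ : f s₀ ≠ 0) : volume {s | f s = 0} = 0 := by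
  have hae := ae_restrict_le_codiscreteWithin (μ := (volume : Measure ℝ)) MeasurableSet.univ
    (hf.preimage_zero_mem_codiscrete hs₀)
  rw [Measure.restrict_univ] at hae
  exact measure_eq_zero_iff_ae_notMem.2 hae

/- Fubini in polar form: each dilation `{x | f (x₀ + s • x) = 0}` of the zero set has measure a
nonzero multiple of it, while a line through `x₀` meets the zero set in a discrete set. -/
theorem addHaar_zeroSet_eq_zero_of_analyticOnNhd [MeasurableSpace E] [BorelSpace E]
    [FiniteDimensional ℝ E] (μ : Measure E) [μ.IsAddHaarMeasure] {f : E → F}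
    (hf : AnalyticOnNhd ℝ f Set.univ) {x₀ : E} (hx₀ : f x₀ ≠ 0) : μ {x | f x = 0} = 0 := by
  have hfc : Continuous f := hf.continuous
  have hline (x : E) : volume {s : ℝ | f (x₀ + s • x) = 0} = 0 :=
    volume_zeroSet_eq_zero_of_analyticOnNhd_real
      (hf.comp (f := fun s : ℝ => x₀ + s • x) (fun s _ => by fun_prop) fun _ _ => trivial)
      (s₀ := 0) (by simpa using hx₀)
  have hprod : (volume : Measure ℝ).prod μ {p | f (x₀ + p.1 • p.2) = 0} = 0 :=
    measure_prod_null_of_ae_null_right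
      (isClosed_singleton.preimage (by fun_prop)).measurableSet (.of_forall hline)
  obtain ⟨s, hs, hs0⟩ :=
    ((Measure.measure_ae_null_of_prod_null hprod).and (volume.ae_ne (0 : ℝ))).exists
  have hdilate : μ ((s • ·) ⁻¹' ((x₀ + ·) ⁻¹' {x | f x = 0})) = 0 := hs
  rw [Measure.addHaar_preimage_smul μ hs0, measure_preimage_add] at hdilate
  simpa [hs0] using hdilate

end NullSets

section HalfTurns

variable {E : Type*} [NormedAddCommGroup E] [InnerProductSpace ℝ E]

theorem inner_reflection_span_singleton_eq_iff {u : E} (hu : u ≠ 0) (n x : E) (k : ℝ) :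
    ⟪n, (ℝ ∙ u).reflection x⟫ = k ↔ 2 * ⟪n, u⟫ * ⟪u, x⟫ - ‖u‖ ^ 2 * (⟪n, x⟫ + k) = 0 := by
  have hu' : ‖u‖ ≠ 0 := norm_ne_zero_iff.2 hu
  rw [Submodule.reflection_singleton_apply, inner_sub_right, two_smul, inner_add_right,
    real_inner_smul_right, RCLike.ofReal_real_eq_id, id]
  field_simp
  constructor <;> intro h <;> linear_combination h

variable [FiniteDimensional ℝ E]

theorem exists_inner_reflection_span_singleton_ne (hE : 2 ≤ finrank ℝ E) {n x : E} (hn : n ≠ 0)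
    (hx : x ≠ 0) (k : ℝ) : ∃ u : E, 2 * ⟪n, u⟫ * ⟪u, x⟫ - ‖u‖ ^ 2 * (⟪n, x⟫ + k) ≠ 0 := by
  by_contra! h
  obtain ⟨e, he, he0⟩ : ∃ e ∈ (ℝ ∙ n)ᗮ, e ≠ 0 := by
    refine Submodule.exists_mem_ne_zero_of_ne_bot fun hbot => ?_
    have := (ℝ ∙ n).finrank_add_finrank_orthogonal
    rw [hbot, finrank_bot, finrank_span_singleton hn] at this
    lia
  have hk : ⟪n, x⟫ + k = 0 := by
    simpa [Submodule.mem_orthogonal_singleton_iff_inner_right.1 he, he0] using h e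
  have hprod (u : E) : ⟪n, u⟫ * ⟪u, x⟫ = 0 := by linear_combination h u / 2 + ‖u‖ ^ 2 / 2 * hk
  have hnx : ⟪n, x⟫ = 0 := by simpa [hn] using hprod n
  simpa [inner_add_left, inner_add_right, hnx, hn, hx] using hprod (n + x)

/- By Fubini: a fixed `x ≠ 0` is moved off the hyperplane by the half-turn about almost every axis
`u`, the condition on `u` being polynomial. -/
theorem measure_hyperplane_eq_zero_of_map_halfTurn_eq [MeasurableSpace E] [BorelSpace E]
    (hE : 2 ≤ finrank ℝ E) (ν : Measure E) [SFinite ν] (hν₀ : ν {0} = 0)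
    (hν : ∀ u : E, u ≠ 0 → ν.map (ℝ ∙ u).reflection = ν) {n : E} (hn : n ≠ 0) (k : ℝ) :
    ν {x | ⟪n, x⟫ = k} = 0 := by
  let Q (u x : E) : ℝ := 2 * ⟪n, u⟫ * ⟪u, x⟫ - ‖u‖ ^ 2 * (⟪n, x⟫ + k)
  have hQ (x : E) : ContDiff ℝ ω fun u => Q u x :=
    ((contDiff_const.mul (contDiff_const.inner ℝ contDiff_id)).mul
      (contDiff_id.inner ℝ contDiff_const)).sub ((contDiff_norm_sq ℝ).mul contDiff_const)
  have hsection : ∀ᵐ x ∂ν, volume {u | Q u x = 0} = 0 := by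
    filter_upwards [measure_eq_zero_iff_ae_notMem.1 hν₀] with x hx
    obtain ⟨u, hu⟩ := exists_inner_reflection_span_singleton_ne hE hn hx k
    exact addHaar_zeroSet_eq_zero_of_analyticOnNhd volume
      (contDiff_omega_iff_analyticOnNhd.1 (hQ x)) hu
  have hprod : (volume : Measure E).prod ν {p | Q p.1 p.2 = 0} = 0 :=
    measure_prod_null_of_ae_null_right
      (isClosed_singleton.preimage (by fun_prop)).measurableSet hsection
  have : Nontrivial E := ⟨n, 0, hn⟩
  obtain ⟨u, hu, hu0⟩ :=
    ((Measure.measure_ae_null_of_prod_null hprod).and (volume.ae_ne (0 : E))).exists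
  calc ν {x | ⟪n, x⟫ = k} = ν ((ℝ ∙ u).reflection ⁻¹' {x | ⟪n, x⟫ = k}) := by
        nth_rw 1 [← hν u hu0]
        exact Measure.map_apply (LinearIsometryEquiv.continuous _).measurable
          (isClosed_eq (by fun_prop) continuous_const).measurableSet
    _ = ν {x | Q u x = 0} := by
        congr 1
        ext x
        exact inner_reflection_span_singleton_eq_iff hu0 n x k
    _ = 0 := hu

end HalfTurns

section Rotations

theorem affineIndependent_linearIsometryEquiv_comp {ι E F : Type*} [NormedAddCommGroup E]
    [NormedSpace ℝ E] [NormedAddCommGroup F] [NormedSpace ℝ F] {m : ι → E}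
    (hm : AffineIndependent ℝ m) (φ : E ≃ₗᵢ[ℝ] F) : AffineIndependent ℝ fun i => φ (m i) :=
  hm.map' φ.toLinearEquiv.toLinearMap.toAffineMap φ.injective

variable {n : Type*} [Fintype n] [DecidableEq n]

theorem exists_linearIsometryEquiv_of_mem_orthogonalGroup {R : Matrix n n ℝ}
    (hR : R ∈ Matrix.orthogonalGroup n ℝ) :
    ∃ φ : EuclideanSpace ℝ n ≃ₗᵢ[ℝ] EuclideanSpace ℝ n, ∀ x, Matrix.toEuclideanLin R x = φ x :=
  ⟨Unitary.linearIsometryEquiv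
    ⟨Matrix.toEuclideanCLM (𝕜 := ℝ) R, Unitary.map_mem Matrix.toEuclideanCLM hR⟩, fun _ => rfl⟩

theorem exists_mem_specialOrthogonalGroup_eq_reflection
    (K : Submodule ℝ (EuclideanSpace ℝ n)) (hK : Even (finrank ℝ Kᗮ)) :
    ∃ g ∈ Matrix.specialOrthogonalGroup n ℝ, ∀ x, Matrix.toEuclideanLin g x = K.reflection x := by
  let b := EuclideanSpace.basisFun n ℝ
  let g := K.reflection.toLinearMap.toMatrix b.toBasis b.toBasis
  refine ⟨g, Matrix.mem_specialOrthogonalGroup_iff.2 ⟨?_, ?_⟩, fun x => ?_⟩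
  · exact K.reflection.toMatrix_mem_unitaryGroup b b
  · rw [LinearMap.det_toMatrix, K.det_reflection, hK.neg_one_pow]
  · rw [Matrix.toEuclideanLin_eq_toLin_orthonormal, Matrix.toLin_toMatrix]
    rfl

theorem continuous_toEuclideanLin_apply (x : EuclideanSpace ℝ n) :
    Continuous fun R : Matrix n n ℝ => Matrix.toEuclideanLin R x :=
  (PiLp.continuous_toLp 2 _).comp (continuous_id.matrix_mulVec continuous_const)

instance : BorelSpace (Matrix (Fin 3) (Fin 3) ℝ) :=
  inferInstanceAs (BorelSpace (Fin 3 → Fin 3 → ℝ))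

instance : SecondCountableTopology (Matrix (Fin 3) (Fin 3) ℝ) :=
  inferInstanceAs (SecondCountableTopology (Fin 3 → Fin 3 → ℝ))

/-- A measure on 3×3 matrices that is concentrated on `SO(3)` and invariant under left translation
by `SO(3)`, as the Haar measure of `SO(3)` is. -/
structure IsRotationInvariant (μ : Measure (Matrix (Fin 3) (Fin 3) ℝ)) : Prop where
  compl_eq_zero :
    μ (Matrix.specialOrthogonalGroup (Fin 3) ℝ : Set (Matrix (Fin 3) (Fin 3) ℝ))ᶜ = 0
  map_mul_left_eq_self :
    ∀ g ∈ Matrix.specialOrthogonalGroup (Fin 3) ℝ, μ.map (fun R => g * R) = μ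

theorem IsRotationInvariant.ae_exists_linearIsometryEquiv
    {μ : Measure (Matrix (Fin 3) (Fin 3) ℝ)} (hμ : IsRotationInvariant μ) :
    ∀ᵐ R ∂μ, ∃ φ : EuclideanSpace ℝ (Fin 3) ≃ₗᵢ[ℝ] EuclideanSpace ℝ (Fin 3),
      ∀ x, Matrix.toEuclideanLin R x = φ x := by
  filter_upwards [mem_ae_iff.2 hμ.compl_eq_zero] with R hR
  exact exists_linearIsometryEquiv_of_mem_orthogonalGroup
    (Matrix.mem_specialOrthogonalGroup_iff.1 hR).1

theorem IsRotationInvariant.measure_inner_eq_zero {μ : Measure (Matrix (Fin 3) (Fin 3) ℝ)}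
    [SFinite μ] (hμ : IsRotationInvariant μ) {a v : EuclideanSpace ℝ (Fin 3)} (ha : a ≠ 0)
    (hv : v ≠ 0) (k : ℝ) :
    μ {R | ⟪a, Matrix.toEuclideanLin R v⟫ = k} = 0 := by
  let orbit (R : Matrix (Fin 3) (Fin 3) ℝ) : EuclideanSpace ℝ (Fin 3) := Matrix.toEuclideanLin R v
  have horbit : Measurable orbit := (continuous_toEuclideanLin_apply v).measurable
  have hzero : μ.map orbit {0} = 0 := by
    rw [Measure.map_apply horbit (measurableSet_singleton 0), measure_eq_zero_iff_ae_notMem]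
    filter_upwards [hμ.ae_exists_linearIsometryEquiv] with R ⟨φ, hφ⟩ hR
    exact hv (φ.map_eq_zero_iff.1 ((hφ v).symm.trans hR))
  have hhalfTurn (u : EuclideanSpace ℝ (Fin 3)) (hu : u ≠ 0) :
      (μ.map orbit).map (ℝ ∙ u).reflection = μ.map orbit := by
    have : Fact (finrank ℝ (EuclideanSpace ℝ (Fin 3)) = 2 + 1) := ⟨by simp⟩
    obtain ⟨g, hg, hgu⟩ := exists_mem_specialOrthogonalGroup_eq_reflection (ℝ ∙ u)
      (by simp [Submodule.finrank_orthogonal_span_singleton (n := 2) hu])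
    have hcomm : (ℝ ∙ u).reflection ∘ orbit = orbit ∘ fun R => g * R := by
      ext1 R
      simp only [orbit, Function.comp_apply, ← hgu, Matrix.toLpLin_mul_same, LinearMap.comp_apply]
    have hmul : Measurable fun R : Matrix (Fin 3) (Fin 3) ℝ => g * R :=
      (continuous_const.matrix_mul continuous_id).measurable
    rw [Measure.map_map (LinearIsometryEquiv.continuous _).measurable horbit, hcomm,
      ← Measure.map_map horbit hmul, hμ.map_mul_left_eq_self g hg]
  have hnull := measure_hyperplane_eq_zero_of_map_halfTurn_eq (by simp) _ hzero hhalfTurn ha k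
  rwa [Measure.map_apply horbit
    (isClosed_eq (by fun_prop) continuous_const).measurableSet] at hnull

end Rotations

section CayleyMenger

variable {ι V : Type*} [Fintype ι] [NormedAddCommGroup V] [InnerProductSpace ℝ V]

theorem sum_mul_norm_sub_sq (m : ι → V) (w : ι → ℝ) (x : V) :
    ∑ j, w j * ‖x - m j‖ ^ 2 =
      (∑ j, w j) * ‖x‖ ^ 2 - 2 * ⟪x, ∑ j, w j • m j⟫ + ∑ j, w j * ‖m j‖ ^ 2 := by
  simp only [norm_sub_sq_real, inner_sum, real_inner_smul_right, Finset.sum_mul, Finset.mul_sum,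
    ← Finset.sum_sub_distrib, ← Finset.sum_add_distrib]
  exact Finset.sum_congr rfl fun j _ => by ring

theorem eq_zero_of_sum_mul_norm_sub_sq_eq {m : ι → V} (hm : AffineIndependent ℝ m) {w : ι → ℝ}
    (hw : ∑ j, w j = 0) {k : ℝ} (h : ∀ i, ∑ j, w j * ‖m i - m j‖ ^ 2 = k) : w = 0 := by
  set y := ∑ j, w j • m j with hy
  have hinner (i : ι) : ⟪m i, y⟫ = (∑ j, w j * ‖m j‖ ^ 2 - k) / 2 := by
    have := h i
    rw [sum_mul_norm_sub_sq, hw] at this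
    linear_combination -this / 2
  have hy0 : ⟪y, y⟫ = 0 := by
    nth_rw 1 [hy]
    simp only [sum_inner, real_inner_smul_left, hinner, ← Finset.sum_mul, hw, zero_mul]
  have hsum := hm.eq_zero_of_sum_eq_zero hw (inner_self_eq_zero.1 hy0)
  exact funext fun i => hsum i (Finset.mem_univ i)

theorem norm_sum_smul_sub_sq_of_sum_eq_one {m : ι → V} {p u : ι → ℝ} {κ : ℝ} (hp : ∑ j, p j = 1)
    (hu : ∀ i, u i = ∑ j, p j * ‖m i - m j‖ ^ 2 - κ) (hκ : ∑ j, p j * u j = κ) (i : ι) :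
    ‖∑ j, p j • m j - m i‖ ^ 2 = u i := by
  set x := ∑ j, p j • m j
  set S := ∑ j, p j * ‖m j‖ ^ 2
  have hLeibniz (z : V) : ∑ j, p j * ‖z - m j‖ ^ 2 = ‖x - z‖ ^ 2 + (S - ‖x‖ ^ 2) := by
    rw [sum_mul_norm_sub_sq, hp, norm_sub_rev x z, norm_sub_sq_real]
    ring
  have hu' (i : ι) : u i = ‖x - m i‖ ^ 2 + (S - ‖x‖ ^ 2 - κ) := by rw [hu, hLeibniz]; ring
  have hsum : ∑ j, p j * u j = ∑ j, p j * ‖x - m j‖ ^ 2 + (S - ‖x‖ ^ 2 - κ) := by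
    simp only [hu', mul_add, Finset.sum_add_distrib, ← Finset.sum_mul, hp, one_mul]
  rw [hκ, hLeibniz, sub_self, norm_zero] at hsum
  linear_combination hsum / 2 - hu' i

/- The unknowns `ξ, w, η` are the coordinates of a kernel vector of the bordered distance matrix;
up to scaling, `w` lists the barycentric coordinates of the common point `x`. -/
theorem exists_norm_sub_sq_eq_of_bordered_kernel {m : ι → V} (hm : AffineIndependent ℝ m)
    {u w : ι → ℝ} {ξ η : ℝ} (hne : ¬ (ξ = 0 ∧ w = 0 ∧ η = 0))
    (hfirst : ∑ j, u j * w j + η = 0)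
    (hmiddle : ∀ i, u i * ξ + ∑ j, ‖m i - m j‖ ^ 2 * w j + η = 0)
    (hlast : ξ + ∑ j, w j = 0) : ∃ x, ∀ i, ‖x - m i‖ ^ 2 = u i := by
  have hξ : ξ ≠ 0 := by
    rintro rfl
    have hw : w = 0 := by
      refine eq_zero_of_sum_mul_norm_sub_sq_eq hm (k := -η) (by simpa using hlast) fun i => ?_
      simp only [mul_comm (w _)]
      linear_combination hmiddle i
    exact hne ⟨rfl, hw, by simpa [hw] using hfirst⟩
  have hscale (a : ι → ℝ) : ∑ j, -(w j / ξ) * a j = -(∑ j, a j * w j) / ξ := by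
    rw [← Finset.sum_neg_distrib, Finset.sum_div]
    exact Finset.sum_congr rfl fun j _ => by ring
  refine ⟨_, norm_sum_smul_sub_sq_of_sum_eq_one (p := fun j => -(w j / ξ)) (κ := η / ξ) ?_
    (fun i => ?_) ?_⟩
  · rw [Finset.sum_neg_distrib, ← Finset.sum_div]
    field_simp
    linear_combination -hlast
  · rw [hscale]
    field_simp
    linear_combination hmiddle i
  · rw [hscale]
    field_simp
    linear_combination -hfirst

theorem exists_norm_sub_sq_eq_of_fM_eq_zero {m : Fin 4 → E3} (hm : AffineIndependent ℝ m)
    {u : Fin 4 → ℝ} (h : fM m u = 0) : ∃ x, ∀ i, ‖x - m i‖ ^ 2 = u i := by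
  obtain ⟨v, hv, hker⟩ := Matrix.exists_mulVec_eq_zero_iff.2 h
  have hrow (i : Fin 6) := congrFun hker i
  simp only [Matrix.mulVec, dotProduct, Fin.sum_univ_six, Matrix.of_apply, Pi.zero_apply] at hrow
  refine exists_norm_sub_sq_eq_of_bordered_kernel hm (w := ![v 1, v 2, v 3, v 4]) (ξ := v 0)
    (η := v 5) ?_ ?_ ?_ ?_
  · rintro ⟨h0, hw, h5⟩
    refine hv (funext fun i => ?_)
    have hw' (j : Fin 4) := congrFun hw j
    fin_cases i
    exacts [h0, hw' 0, hw' 1, hw' 2, hw' 3, h5]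
  · simpa [Fin.sum_univ_four] using hrow 0
  · intro i
    have := hrow i.succ.castSucc
    fin_cases i <;> simpa [Fin.sum_univ_four, add_assoc] using this
  · simpa [Fin.sum_univ_four, add_assoc] using hrow 5

theorem contDiff_det_of_entries {X n : Type*} [NormedAddCommGroup X] [NormedSpace ℝ X] [Fintype n]
    [DecidableEq n] {k : WithTop ℕ∞} {A : X → Matrix n n ℝ}
    (hA : ∀ i j, ContDiff ℝ k fun x => A x i j) : ContDiff ℝ k fun x => (A x).det := by
  simp only [Matrix.det_apply']
  exact ContDiff.sum fun σ _ => contDiff_const.mul (contDiff_prod fun i _ => hA _ _)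

theorem contDiff_fM_s16 {X : Type*} [NormedAddCommGroup X] [NormedSpace ℝ X] {k : WithTop ℕ∞}
    {m : X → Fin 4 → E3} {u : X → Fin 4 → ℝ} (hm : ∀ i, ContDiff ℝ k fun x => m x i)
    (hu : ∀ i, ContDiff ℝ k fun x => u x i) : ContDiff ℝ k fun x => fM (m x) (u x) := by
  have hd (i j : Fin 4) := ((hm i).sub (hm j)).norm_sq ℝ
  refine contDiff_det_of_entries fun i j => ?_
  fin_cases i <;> fin_cases j
  all_goals first | exact contDiff_const | exact hu _ | exact hd _ _

end CayleyMenger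

section HesseForm

variable {E : Type*} [NormedAddCommGroup E] [InnerProductSpace ℝ E]

theorem eq_or_eq_neg_of_inner_sq_eq {n n' : E} (hn : ‖n‖ = 1) (hn' : ‖n'‖ = 1)
    (h : ∀ d, ⟪n, d⟫ ^ 2 = ⟪n', d⟫ ^ 2) : n' = n ∨ n' = -n := by
  have hsq : ⟪n', n⟫ ^ 2 = 1 := by rw [← h n, real_inner_self_eq_norm_sq, hn]; norm_num
  exact (sq_eq_one_iff.1 hsq).imp (inner_eq_one_iff_of_norm_eq_one hn' hn).1
    (inner_eq_neg_one_iff_of_norm_eq_one hn' hn).1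

/-- The Hesse normal form of an affine hyperplane: `W = {x | ⟪n, x⟫ = c}` with `n` a unit vector.
The pair `(n, c)` is unique up to a common sign, and `⟪n, x⟫ - c` is the signed distance of `x`
from `W`. -/
structure IsHesseForm (W : AffineSubspace ℝ E) (n : E) (c : ℝ) : Prop where
  norm_eq_one : ‖n‖ = 1
  mem_iff : ∀ x, x ∈ W ↔ ⟪n, x⟫ = c

namespace IsHesseForm

variable {W W' : AffineSubspace ℝ E} {n : E} {c : ℝ}

theorem neg (hW : IsHesseForm W n c) : IsHesseForm W (-n) (-c) :=
  ⟨by rw [norm_neg, hW.norm_eq_one], fun x => by rw [hW.mem_iff, inner_neg_left, neg_inj]⟩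

theorem unique (hW : IsHesseForm W n c) (hW' : IsHesseForm W' n c) : W = W' :=
  SetLike.ext fun x => (hW.mem_iff x).trans (hW'.mem_iff x).symm

theorem inner_self (hW : IsHesseForm W n c) : ⟪n, n⟫ = 1 := by
  rw [real_inner_self_eq_norm_sq, hW.norm_eq_one, one_pow]

theorem nonempty (hW : IsHesseForm W n c) : Nonempty W :=
  ⟨c • n, (hW.mem_iff _).2 (by rw [real_inner_smul_right, hW.inner_self, mul_one])⟩

theorem mem_direction_orthogonal (hW : IsHesseForm W n c) : n ∈ W.directionᗮ := by
  have hne : (W : Set E).Nonempty := Set.nonempty_coe_sort.1 hW.nonempty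
  refine (Submodule.mem_orthogonal' _ _).2 fun v hv => ?_
  obtain ⟨x, hx, y, hy, rfl⟩ := (AffineSubspace.mem_direction_iff_eq_vsub hne v).1 hv
  rw [vsub_eq_sub, inner_sub_right, (hW.mem_iff x).1 hx, (hW.mem_iff y).1 hy, sub_self]

theorem reflection_apply [Nonempty W] [W.direction.HasOrthogonalProjection]
    (hW : IsHesseForm W n c) (p : E) :
    EuclideanGeometry.reflection W p = p - (2 * (⟪n, p⟫ - c)) • n := by
  have hfoot : p - (⟪n, p⟫ - c) • n ∈ W := by
    rw [hW.mem_iff, inner_sub_right, real_inner_smul_right, hW.inner_self]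
    ring
  have h := EuclideanGeometry.reflection_orthogonal_vadd hfoot
    (W.directionᗮ.smul_mem (⟪n, p⟫ - c) hW.mem_direction_orthogonal)
  rw [vadd_eq_add, vadd_eq_add, add_sub_cancel] at h
  rw [h]
  module

theorem norm_sub_smul_sub_sq (hW : IsHesseForm W n c) (p q : E) :
    ‖p - (2 * (⟪n, p⟫ - c)) • n - q‖ ^ 2 = ‖p - q‖ ^ 2 + 4 * ((⟪n, p⟫ - c) * (⟪n, q⟫ - c)) := by
  rw [sub_right_comm, norm_sub_sq_real, norm_smul, real_inner_smul_right, inner_sub_left,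
    real_inner_comm n p, real_inner_comm n q, hW.norm_eq_one, mul_one, Real.norm_eq_abs, sq_abs]
  ring

end IsHesseForm

theorem exists_isHesseForm_of_finrank_direction_orthogonal {W : AffineSubspace ℝ E}
    [W.direction.HasOrthogonalProjection] (hne : (W : Set E).Nonempty)
    (hW : finrank ℝ W.directionᗮ = 1) : ∃ n c, IsHesseForm W n c := by
  obtain ⟨p, hp⟩ := hne
  have : Nontrivial W.directionᗮ := nontrivial_of_finrank_eq_succ hW
  have : FiniteDimensional ℝ W.directionᗮ := .of_finrank_eq_succ hW
  obtain ⟨⟨n, hn⟩, hn1 : ‖n‖ = 1⟩ := exists_norm_eq W.directionᗮ zero_le_one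
  have hspan : ℝ ∙ n = W.directionᗮ :=
    Submodule.eq_of_le_of_finrank_eq ((Submodule.span_singleton_le_iff_mem n _).2 hn)
      (by rw [hW, finrank_span_singleton (norm_ne_zero_iff.1 (by simp [hn1]))])
  refine ⟨n, ⟪n, p⟫, hn1, fun x => ?_⟩
  rw [← AffineSubspace.vsub_right_mem_direction_iff_mem hp, ← W.direction.orthogonal_orthogonal,
    ← hspan, Submodule.mem_orthogonal_singleton_iff_inner_right, vsub_eq_sub, inner_sub_right,
    sub_eq_zero]

theorem IsPlane.exists_isHesseForm {W : AffineSubspace ℝ E3} (hW : IsPlane W) :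
    ∃ n c, IsHesseForm W n c := by
  have := W.direction.finrank_add_finrank_orthogonal
  rw [hW.2, finrank_euclideanSpace_fin] at this
  exact exists_isHesseForm_of_finrank_direction_orthogonal hW.1 (Nat.add_left_cancel this)

theorem IsHesseForm.norm_reflAff_sub_sq {W : AffineSubspace ℝ E3} {n : E3} {c : ℝ}
    (hW : IsHesseForm W n c) (p q : E3) :
    ‖reflAff W p - q‖ ^ 2 = ‖p - q‖ ^ 2 + 4 * ((⟪n, p⟫ - c) * (⟪n, q⟫ - c)) := by
  have : Nonempty W := hW.nonempty
  rw [reflAff, dif_pos this, hW.reflection_apply, hW.norm_sub_smul_sub_sq]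

end HesseForm

section Interpolation

variable {E : Type*} [NormedAddCommGroup E] [InnerProductSpace ℝ E]

theorem eq_zero_and_eq_norm_sq_of_quadratic_eq_norm_sq {x y z : E} {a b c : ℝ}
    (h : ∀ s : ℝ, s ^ 2 * a + s * b + c = ‖s ^ 2 • x + s • y + z‖ ^ 2) : x = 0 ∧ a = ‖y‖ ^ 2 := by
  have hexpand (s : ℝ) : s ^ 2 * a + s * b + c = s ^ 4 * ‖x‖ ^ 2 + 2 * s ^ 3 * ⟪x, y⟫ +
      s ^ 2 * (‖y‖ ^ 2 + 2 * ⟪x, z⟫) + 2 * s * ⟪y, z⟫ + ‖z‖ ^ 2 := by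
    rw [h]
    simp only [norm_add_sq_real, inner_add_left, real_inner_smul_left, real_inner_smul_right,
      norm_smul, mul_pow, Real.norm_eq_abs, sq_abs]
    ring
  have hx : x = 0 := by
    rw [← norm_eq_zero, ← sq_eq_zero_iff]
    linear_combination (4 * hexpand 1 + 4 * hexpand (-1) - hexpand 2 - hexpand (-2)
      - 6 * hexpand 0) / 24
  refine ⟨hx, ?_⟩
  have h₀ := hexpand 0
  have h₁ := hexpand 1
  have h₂ := hexpand (-1)
  rw [hx, norm_zero, inner_zero_left, inner_zero_left] at h₀ h₁ h₂
  linear_combination (h₁ + h₂) / 2 - h₀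

variable {ι : Type*}

/-- The values `⟪g, v i⟫ + b` at the points `v i` of the affine function with gradient `g` and
constant term `b`. -/
def affineValues (v : ι → E) : E × ℝ →ₗ[ℝ] ι → ℝ :=
  LinearMap.pi fun i => (innerₛₗ ℝ (v i)).coprod LinearMap.id

theorem affineValues_apply (v : ι → E) (g : E) (b : ℝ) (i : ι) :
    affineValues v (g, b) i = ⟪g, v i⟫ + b := by
  simp [affineValues, real_inner_comm]

variable [Fintype ι] [FiniteDimensional ℝ E] {v : ι → E}

theorem affineValues_injective (hv : AffineIndependent ℝ v)
    (hcard : Fintype.card ι = finrank ℝ E + 1) : Function.Injective (affineValues v) := by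
  refine LinearMap.ker_eq_bot.1 (LinearMap.ker_eq_bot'.2 fun ⟨g, b⟩ h => ?_)
  have hvalue (i : ι) : ⟪g, v i⟫ = -b :=
    eq_neg_of_add_eq_zero_left ((affineValues_apply v g b i).symm.trans (congrFun h i))
  have hspan : vectorSpan ℝ (Set.range v) ≤ (ℝ ∙ g)ᗮ := by
    rw [vectorSpan_def, Submodule.span_le]
    rintro _ ⟨_, ⟨i, rfl⟩, _, ⟨j, rfl⟩, rfl⟩
    exact Submodule.mem_orthogonal_singleton_iff_inner_right.2
      (by simp only [vsub_eq_sub, inner_sub_right, hvalue, sub_self])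
  rw [hv.vectorSpan_eq_top_of_card_eq_finrank_add_one hcard] at hspan
  have hg : g = 0 := inner_self_eq_zero.1
    (Submodule.mem_orthogonal_singleton_iff_inner_right.1 (hspan (Submodule.mem_top (x := g))))
  have : Nonempty ι := Fintype.card_pos_iff.1 (by lia)
  have hb : b = 0 := by simpa [hg] using (hvalue (Classical.arbitrary ι)).symm
  rw [hg, hb, Prod.mk_zero_zero]

theorem affineValues_surjective (hv : AffineIndependent ℝ v)
    (hcard : Fintype.card ι = finrank ℝ E + 1) : Function.Surjective (affineValues v) :=
  (LinearMap.injective_iff_surjective_of_finrank_eq_finrank (by simp [hcard])).1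
    (affineValues_injective hv hcard)

/- The interpolant of the right-hand side is quadratic in `s`, so comparing its constant term with
the squared norm of its gradient forces the leading coefficient of the gradient to vanish. -/
theorem eq_norm_sq_of_forall_exists_inner_add_norm_sq_eq (hv : AffineIndependent ℝ v)
    (hcard : Fintype.card ι = finrank ℝ E + 1) {α β γ : ι → ℝ} {g : E} {b : ℝ}
    (hβ : ∀ i, ⟪g, v i⟫ + b = β i)
    (h : ∀ s : ℝ, ∃ y : E, ∀ i, ⟪y, v i⟫ + ‖y‖ ^ 2 = s ^ 2 * α i + s * β i + γ i) (i : ι) :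
    α i = ‖g‖ ^ 2 := by
  obtain ⟨⟨gα, bα⟩, hα⟩ := affineValues_surjective hv hcard α
  obtain ⟨⟨gγ, bγ⟩, hγ⟩ := affineValues_surjective hv hcard γ
  have hβ' : affineValues v (g, b) = β := funext fun i => (affineValues_apply v g b i).trans (hβ i)
  have hquad (s : ℝ) : s ^ 2 * bα + s * b + bγ = ‖s ^ 2 • gα + s • g + gγ‖ ^ 2 := by
    obtain ⟨y, hy⟩ := h s
    have hvalues : affineValues v (s ^ 2 • (gα, bα) + s • (g, b) + (gγ, bγ)) =
        affineValues v (y, ‖y‖ ^ 2) := by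
      rw [map_add, map_add, map_smul, map_smul, hα, hβ', hγ]
      exact funext fun i => ((affineValues_apply v y _ i).trans (hy i)).symm
    obtain ⟨hgrad, hconst⟩ := Prod.ext_iff.1 (affineValues_injective hv hcard hvalues)
    exact hconst.trans (congrArg (‖·‖ ^ 2) hgrad).symm
  obtain ⟨rfl, rfl⟩ := eq_zero_and_eq_norm_sq_of_quadratic_eq_norm_sq hquad
  rw [← hα, affineValues_apply, inner_zero_left, zero_add]

end Interpolation

section SortingCriterion

/-- The echo sorting criterion: the value of `f_M` at the squared distances from the microphones
`m i` to the mirror images of the loudspeaker `L` in the walls `W i`. -/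
def sortingCriterion (W : Fin 4 → AffineSubspace ℝ E3) (m : Fin 4 → E3) (L : E3) : ℝ :=
  fM m fun i => ‖reflAff (W i) L - m i‖ ^ 2

variable {W : Fin 4 → AffineSubspace ℝ E3} {n : Fin 4 → E3} {c : Fin 4 → ℝ}

theorem contDiff_sortingCriterion {X : Type*} [NormedAddCommGroup X] [NormedSpace ℝ X]
    {k : WithTop ℕ∞} (hW : ∀ i, IsHesseForm (W i) (n i) (c i)) {m : X → Fin 4 → E3} {L : X → E3}
    (hm : ∀ i, ContDiff ℝ k fun x => m x i) (hL : ContDiff ℝ k L) :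
    ContDiff ℝ k fun x => sortingCriterion W (m x) (L x) := by
  refine contDiff_fM_s16 hm fun i => ?_
  simp only [(hW i).norm_reflAff_sub_sq]
  exact ((hL.sub (hm i)).norm_sq ℝ).add (contDiff_const.mul
    (((contDiff_const.inner ℝ hL).sub contDiff_const).mul
      ((contDiff_const.inner ℝ (hm i)).sub contDiff_const)))

theorem continuous_sortingCriterion {X : Type*} [TopologicalSpace X]
    (hW : ∀ i, IsHesseForm (W i) (n i) (c i)) {m : X → Fin 4 → E3} {L : X → E3}
    (hm : Continuous m) (hL : Continuous L) :
    Continuous fun x => sortingCriterion W (m x) (L x) := by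
  have hpair : ContDiff ℝ 0 fun q : (Fin 4 → E3) × E3 => sortingCriterion W q.1 q.2 :=
    contDiff_sortingCriterion hW (fun i => by fun_prop) (by fun_prop)
  exact (hpair.continuous.comp' (hm.prodMk hL) :)

variable {m : Fin 4 → E3} {L : E3}

theorem exists_inner_add_norm_sq_eq_of_sortingCriterion_eq_zero
    (hW : ∀ i, IsHesseForm (W i) (n i) (c i)) (hm : AffineIndependent ℝ m)
    (h : sortingCriterion W m L = 0) :
    ∃ y, ∀ i, ⟪y, m i - L⟫ + ‖y‖ ^ 2 = (⟪n i, L⟫ - c i) * (⟪n i, m i⟫ - c i) := by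
  obtain ⟨x, hx⟩ := exists_norm_sub_sq_eq_of_fM_eq_zero hm h
  refine ⟨(1 / 2 : ℝ) • (L - x), fun i => ?_⟩
  have hxi := hx i
  rw [(hW i).norm_reflAff_sub_sq, show x - m i = (L - m i) - (L - x) by abel,
    norm_sub_sq_real, ← neg_sub (m i) L, inner_neg_left, real_inner_comm] at hxi
  rw [real_inner_smul_left, norm_smul, mul_pow, Real.norm_eq_abs, sq_abs]
  linear_combination hxi / 4

theorem inner_sq_eq_norm_sq_of_forall_sortingCriterion_eq_zero
    (hW : ∀ i, IsHesseForm (W i) (n i) (c i)) (hm : AffineIndependent ℝ m)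
    (h : ∀ t, sortingCriterion W (fun i => m i + t) (L + t) = 0) {d g : E3} {b : ℝ}
    (hg : ∀ i, ⟪g, m i - L⟫ + b = ⟪n i, d⟫ * ((⟪n i, L⟫ - c i) + (⟪n i, m i⟫ - c i)))
    (i : Fin 4) : ⟪n i, d⟫ ^ 2 = ‖g‖ ^ 2 := by
  have htranslate (t : E3) : AffineIndependent ℝ fun i => m i + t :=
    hm.map' (AffineEquiv.vaddConst ℝ t).toAffineMap (AffineEquiv.vaddConst ℝ t).injective
  have hdiff : AffineIndependent ℝ fun i => m i - L := by
    simpa only [sub_eq_add_neg] using htranslate (-L)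
  refine eq_norm_sq_of_forall_exists_inner_add_norm_sq_eq hdiff (by simp)
    (α := fun i => ⟪n i, d⟫ ^ 2) (γ := fun i => (⟪n i, L⟫ - c i) * (⟪n i, m i⟫ - c i)) hg
    (fun s => ?_) i
  obtain ⟨y, hy⟩ := exists_inner_add_norm_sq_eq_of_sortingCriterion_eq_zero hW
    (htranslate (s • d)) (h (s • d))
  refine ⟨y, fun i => ?_⟩
  have hyi := hy i
  rw [add_sub_add_right_eq_sub, inner_add_right, inner_add_right, real_inner_smul_right] at hyi
  linear_combination hyi

theorem eq_or_eq_neg_of_forall_sortingCriterion_eq_zero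
    (hW : ∀ i, IsHesseForm (W i) (n i) (c i)) (hm : AffineIndependent ℝ m)
    (h : ∀ t, sortingCriterion W (fun i => m i + t) (L + t) = 0) (i j : Fin 4) :
    n j = n i ∨ n j = -n i := by
  refine eq_or_eq_neg_of_inner_sq_eq (hW i).norm_eq_one (hW j).norm_eq_one fun d => ?_
  obtain ⟨⟨g, b⟩, hgb⟩ := affineValues_surjective hm (by simp)
    fun i => ⟪n i, d⟫ * ((⟪n i, L⟫ - c i) + (⟪n i, m i⟫ - c i))
  have hsq := inner_sq_eq_norm_sq_of_forall_sortingCriterion_eq_zero hW hm h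
    (d := d) (g := g) (b := ⟪g, L⟫ + b) fun i => by
      rw [← congrFun hgb i, affineValues_apply, inner_sub_right]
      ring
  rw [hsq i, hsq j]

/- Translating along the common normal `a`, the linear coefficient is interpolated by an affine
function with gradient `a - 2 • g`, which must therefore be a unit vector. -/
theorem inner_eq_norm_sq_of_forall_sortingCriterion_eq_zero {a : E3}
    (hW : ∀ i, IsHesseForm (W i) a (c i)) (hm : AffineIndependent ℝ m)
    (h : ∀ t, sortingCriterion W (fun i => m i + t) (L + t) = 0) {g : E3} {b : ℝ}
    (hg : ∀ i, ⟪g, m i⟫ + b = c i) : ⟪a, g⟫ = ‖g‖ ^ 2 := by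
  have hsq := inner_sq_eq_norm_sq_of_forall_sortingCriterion_eq_zero hW hm h
    (d := a) (g := a - (2 : ℝ) • g) (b := 2 * ⟪a - g, L⟫ - 2 * b) (fun i => by
      rw [(hW i).inner_self, ← hg i]
      simp only [inner_sub_left, inner_sub_right, real_inner_smul_left]
      ring) 0
  rw [(hW 0).inner_self, norm_sub_sq_real, (hW 0).norm_eq_one, norm_smul, real_inner_smul_right,
    mul_pow, Real.norm_eq_abs, sq_abs] at hsq
  linear_combination hsq / 4

end SortingCriterion

section RandomPlacement

variable {μ : Measure (Matrix (Fin 3) (Fin 3) ℝ)} [SFinite μ]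
  {W : Fin 4 → AffineSubspace ℝ E3} {mini : Fin 4 → E3}

theorem ae_exists_sortingCriterion_ne_zero_of_common_normal
    (hμ : IsRotationInvariant μ) (hm : AffineIndependent ℝ mini) (Lini : E3) {a : E3}
    {c : Fin 4 → ℝ} (hW : ∀ i, IsHesseForm (W i) a (c i)) (hne : ¬ ∀ i j, W i = W j) :
    ∀ᵐ R ∂μ, ∃ t, sortingCriterion W (fun i => Matrix.toEuclideanLin R (mini i) + t)
      (Matrix.toEuclideanLin R Lini + t) ≠ 0 := by
  obtain ⟨⟨g, b⟩, hgb⟩ := affineValues_surjective hm (by simp) c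
  have hgb' (i : Fin 4) : ⟪g, mini i⟫ + b = c i := by rw [← hgb, affineValues_apply]
  have hg : g ≠ 0 := by
    rintro rfl
    simp only [inner_zero_left, zero_add] at hgb'
    exact hne fun i j => (hW i).unique (hgb' i ▸ hgb' j ▸ hW j)
  have ha : a ≠ 0 := norm_ne_zero_iff.1 (by simp [(hW 0).norm_eq_one])
  have hnull := hμ.measure_inner_eq_zero ha hg (‖g‖ ^ 2)
  filter_upwards [measure_eq_zero_iff_ae_notMem.1 hnull, hμ.ae_exists_linearIsometryEquiv]
    with R hR ⟨φ, hφ⟩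
  simp only [hφ] at hR ⊢
  by_contra! h
  refine hR ?_
  rw [← φ.norm_map g]
  exact inner_eq_norm_sq_of_forall_sortingCriterion_eq_zero hW
    (affineIndependent_linearIsometryEquiv_comp hm φ) h fun i => by rw [φ.inner_map_map, hgb']

theorem ae_exists_sortingCriterion_ne_zero (hμ : IsRotationInvariant μ)
    (hm : AffineIndependent ℝ mini) (Lini : E3) (hW : ∀ i, IsPlane (W i))
    (hne : ¬ ∀ i j, W i = W j) :
    ∀ᵐ R ∂μ, ∃ t, sortingCriterion W (fun i => Matrix.toEuclideanLin R (mini i) + t)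
      (Matrix.toEuclideanLin R Lini + t) ≠ 0 := by
  choose n c hnc using fun i => (hW i).exists_isHesseForm
  by_cases hparallel : ∀ i, n i = n 0 ∨ n i = -n 0
  · have hcommon (i : Fin 4) : ∃ c', IsHesseForm (W i) (n 0) c' := by
      rcases hparallel i with hi | hi
      · exact ⟨c i, hi ▸ hnc i⟩
      · exact ⟨-c i, by simpa only [hi, neg_neg] using (hnc i).neg⟩
    choose c' hc' using hcommon
    exact ae_exists_sortingCriterion_ne_zero_of_common_normal hμ hm Lini hc' hne
  · filter_upwards [hμ.ae_exists_linearIsometryEquiv] with R ⟨φ, hφ⟩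
    simp only [hφ]
    by_contra! h
    exact hparallel fun i => eq_or_eq_neg_of_forall_sortingCriterion_eq_zero hnc
      (affineIndependent_linearIsometryEquiv_comp hm φ) h 0 i

theorem measure_prod_sortingCriterion_eq_zero (hμ : IsRotationInvariant μ)
    (hm : AffineIndependent ℝ mini) (Lini : E3) (hW : ∀ i, IsPlane (W i))
    (hne : ¬ ∀ i j, W i = W j) :
    (volume : Measure E3).prod μ
      {p | sortingCriterion W (fun i => Matrix.toEuclideanLin p.2 (mini i) + p.1)
        (Matrix.toEuclideanLin p.2 Lini + p.1) = 0} = 0 := by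
  choose n c hnc using fun i => (hW i).exists_isHesseForm
  have hplace (x : E3) : Continuous fun p : E3 × Matrix (Fin 3) (Fin 3) ℝ =>
      Matrix.toEuclideanLin p.2 x + p.1 :=
    ((continuous_toEuclideanLin_apply x).comp continuous_snd).add continuous_fst
  have hcont := continuous_sortingCriterion hnc (continuous_pi fun i => hplace (mini i))
    (hplace Lini)
  refine measure_prod_null_of_ae_null_right (isClosed_singleton.preimage hcont).measurableSet ?_
  filter_upwards [ae_exists_sortingCriterion_ne_zero hμ hm Lini hW hne] with R ⟨t, ht⟩
  exact addHaar_zeroSet_eq_zero_of_analyticOnNhd volume (contDiff_omega_iff_analyticOnNhd.1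
    (contDiff_sortingCriterion hnc (fun i => by fun_prop) (by fun_prop))) ht

end RandomPlacement

theorem bad_drone_placements_measure_zero_moving_source_general
    (𝒲 : Set (AffineSubspace ℝ E3)) (hcount : 𝒲.Countable) (hplane : ∀ W ∈ 𝒲, IsPlane W)
    (mini : Fin 4 → E3) (hm : AffineIndependent ℝ mini) (Lini : E3)
    (μ : Measure (Matrix (Fin 3) (Fin 3) ℝ)) [SFinite μ]
    (hsupp : μ ((Matrix.specialOrthogonalGroup (Fin 3) ℝ : Set (Matrix (Fin 3) (Fin 3) ℝ))ᶜ) = 0)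
    (hinv : ∀ g ∈ Matrix.specialOrthogonalGroup (Fin 3) ℝ,
      μ.map (fun R => g * R) = μ) :
    ((volume : Measure E3).prod μ)
      {p : E3 × Matrix (Fin 3) (Fin 3) ℝ |
        p.2 ∈ Matrix.specialOrthogonalGroup (Fin 3) ℝ ∧
        ∃ W : Fin 4 → AffineSubspace ℝ E3, (∀ i, W i ∈ 𝒲) ∧ (¬ ∀ i j, W i = W j) ∧
          fM (fun i => Matrix.toEuclideanLin p.2 (mini i) + p.1)
            (fun i => ‖reflAff (W i) (Matrix.toEuclideanLin p.2 Lini + p.1)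
              - (Matrix.toEuclideanLin p.2 (mini i) + p.1)‖ ^ 2) = 0} = 0 := by
  have htuples : {W : Fin 4 → AffineSubspace ℝ E3 |
      (∀ i, W i ∈ 𝒲) ∧ ¬ ∀ i j, W i = W j}.Countable :=
    (Set.countable_pi fun _ => hcount).mono fun W hW => hW.1
  refine measure_mono_null ?_ ((measure_biUnion_null_iff htuples).2 fun W hW =>
    measure_prod_sortingCriterion_eq_zero ⟨hsupp, hinv⟩ hm Lini (fun i => hplane _ (hW.1 i)) hW.2)
  rintro p ⟨-, W, hmem, hne, hzero⟩
  exact Set.mem_biUnion (show W ∈ {W | _} from ⟨hmem, hne⟩) hzero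

/-- Theorem 3.1 (loudspeaker carried by the drone): for a finite set of walls,
non-coplanar initial microphone positions and an initial loudspeaker position on the
drone, the set of drone placements `(t, R) ∈ ℝ³ × SO(3)` for which the echo sorting
criterion vanishes for some walls that are not all equal has measure zero with respect
to the product of the Lebesgue measure on ℝ³ and the Haar probability measure on SO(3)
(encoded as a left-invariant probability measure concentrated on SO(3) inside the space
of 3×3 matrices). -/
theorem bad_drone_placements_measure_zero_moving_source
    (𝒲 : Set (AffineSubspace ℝ E3)) (hfin : 𝒲.Finite) (hplane : ∀ W ∈ 𝒲, IsPlane W)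
    (mini : Fin 4 → E3) (hm : AffineIndependent ℝ mini) (Lini : E3)
    (μ : Measure (Matrix (Fin 3) (Fin 3) ℝ)) [IsProbabilityMeasure μ]
    (hsupp : μ ((Matrix.specialOrthogonalGroup (Fin 3) ℝ : Set (Matrix (Fin 3) (Fin 3) ℝ))ᶜ) = 0)
    (hinv : ∀ g ∈ Matrix.specialOrthogonalGroup (Fin 3) ℝ,
      μ.map (fun R => g * R) = μ) :
    ((volume : Measure E3).prod μ)
      {p : E3 × Matrix (Fin 3) (Fin 3) ℝ |
        p.2 ∈ Matrix.specialOrthogonalGroup (Fin 3) ℝ ∧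
        ∃ W : Fin 4 → AffineSubspace ℝ E3, (∀ i, W i ∈ 𝒲) ∧ (¬ ∀ i j, W i = W j) ∧
          fM (fun i => Matrix.toEuclideanLin p.2 (mini i) + p.1)
            (fun i => ‖reflAff (W i) (Matrix.toEuclideanLin p.2 Lini + p.1)
              - (Matrix.toEuclideanLin p.2 (mini i) + p.1)‖ ^ 2) = 0} = 0 :=
  bad_drone_placements_measure_zero_moving_source_general 𝒲 hfin.countable hplane mini hm Lini μ
    hsupp hinv

end
end

section
/- Let m₁, m₂, m₃, m₄ ∈ ℝ³ be fixed non-coplanar points. Then the set of tuples (s₁, s₂, s₃, s₄) ∈ (ℝ³)⁴ such that the s_i are not all equal and f_M(‖s₁ − m₁‖², ‖s₂ − m₂‖², ‖s₃ − m₃‖², ‖s₄ − m₄‖²) = 0 has Lebesgue measure zero in (ℝ³)⁴ ≅ ℝ¹². -/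
open MeasureTheory
open scoped RealInnerProductSpace

noncomputable section

/-!
Write `C` for the Cayley–Menger matrix of the points `m`. Expanding the determinant along its outer
border gives `f_M(u) = -(u, 1) ⬝ᵥ adj C *ᵥ (u, 1)`. As a function of a single `u i` this is a
quadratic polynomial, whose leading coefficient is minus a diagonal cofactor of `C`, that is, minus
the Cayley–Menger determinant of the points other than `m i`.

That determinant is nonzero when those points are affinely independent: on weights of sum zero the
squared distances define the form `w ↦ -2 ‖∑ j, w j • m j‖ ^ 2`, so a kernel vector of the
Cayley–Menger matrix is an affine dependence. Hence, once all `s j` with `j ≠ i` are fixed, `s i`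
lies on one of at most two spheres about `m i`, and Tonelli's theorem concludes.
-/

section BorderedDeterminant

open Matrix

variable {n R : Type*} [Fintype n] [DecidableEq n] [CommRing R]

lemma adjugate_apply_self_eq_det_submatrix (A : Matrix n n R) (i : n) :
    A.adjugate i i = (A.submatrix (Subtype.val : {j // j ≠ i} → n) Subtype.val).det := by
  set M := A.updateRow i (Pi.single i 1) with hM
  have row_eq_zero : ∀ k, ¬ k ≠ i → ∀ j, j ≠ i → M k j = 0 := by
    intro k hk j hj
    obtain rfl := not_ne_iff.1 hk
    simp [hM, hj]
  have corner_eq_one : M.toSquareBlockProp (¬ · ≠ i) = 1 := by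
    ext ⟨j, hj⟩ ⟨k, hk⟩
    obtain rfl := not_ne_iff.1 hj
    obtain rfl := not_ne_iff.1 hk
    simp [hM, toSquareBlockProp_def]
  have block_eq :
      M.toSquareBlockProp (· ≠ i) = A.submatrix (Subtype.val : {j // j ≠ i} → n) Subtype.val := by
    ext j k
    simp [hM, toSquareBlockProp_def, updateRow_ne j.2]
  rw [adjugate_apply, twoBlockTriangular_det M (· ≠ i) row_eq_zero, corner_eq_one, block_eq,
    det_one, mul_one]

lemma det_fromBlocks_zero_replicateRow_single (A : Matrix n n R) (w : n → R) (j : n) :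
    (fromBlocks 0 (replicateRow Unit (Pi.single j 1)) (replicateCol Unit w) A).det =
      -(A.updateCol j w).det := by
  set M := fromBlocks 0 (replicateRow Unit (Pi.single j 1)) (replicateCol Unit w) A with hM
  have swap_eq : M.submatrix id (Equiv.swap (Sum.inl ()) (Sum.inr j)) =
      fromBlocks 1 0 (replicateCol Unit (A.col j)) (A.updateCol j w) := by
    ext (_ | k) (_ | l)
    · simp [hM]
    · obtain rfl | hl := eq_or_ne l j
      · simp [hM]
      · simp [hM, hl, Equiv.swap_apply_of_ne_of_ne]
    · simp [hM]
    · obtain rfl | hl := eq_or_ne l j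
      · simp [hM]
      · simp [hM, hl, Equiv.swap_apply_of_ne_of_ne]
  have det_swap := congrArg det swap_eq
  rw [det_permute', Equiv.Perm.sign_swap Sum.inl_ne_inr, det_fromBlocks_zero₁₂, det_one,
    one_mul] at det_swap
  simp [← det_swap]

lemma det_fromBlocks_zero_replicateRow_replicateCol (A : Matrix n n R) (v w : n → R) :
    (fromBlocks 0 (replicateRow Unit v) (replicateCol Unit w) A).det =
      -(v ⬝ᵥ A.adjugate *ᵥ w) := by
  set M := fromBlocks 0 (replicateRow Unit v) (replicateCol Unit w) A
  have cofactor_eq (j : n) : M.adjugate (Sum.inr j) (Sum.inl ()) = -(A.updateCol j w).det := by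
    rw [adjugate_apply, ← det_fromBlocks_zero_replicateRow_single]
    congr 1
    ext (_ | k) (_ | l) <;> simp [M, Pi.single_apply]
  rw [det_eq_sum_mul_adjugate_row M (Sum.inl ())]
  simp [cofactor_eq, M, dotProduct, ← cramer_eq_adjugate_mulVec, cramer_apply]

lemma exists_dotProduct_mulVec_update_eq (B : Matrix n n R) (v : n → R) (i : n) :
    ∃ b c : R, ∀ t, Function.update v i t ⬝ᵥ B *ᵥ Function.update v i t =
      B i i * t ^ 2 + b * t + c := by
  set v₀ := Function.update v i 0 with hv₀
  set e : n → R := Pi.single i 1 with he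
  have update_eq (t : R) : Function.update v i t = v₀ + t • e := by
    ext j
    obtain rfl | hj := eq_or_ne j i
    · simp [hv₀, he]
    · simp [hv₀, he, hj]
  refine ⟨v₀ ⬝ᵥ B *ᵥ e + e ⬝ᵥ B *ᵥ v₀, v₀ ⬝ᵥ B *ᵥ v₀, fun t ↦ ?_⟩
  have leading_coeff : e ⬝ᵥ B *ᵥ e = B i i := by simp [e]
  rw [update_eq, ← leading_coeff]
  simp only [mulVec_add, mulVec_smul, dotProduct_add, add_dotProduct, dotProduct_smul,
    smul_dotProduct, smul_eq_mul]
  ring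

end BorderedDeterminant

section CayleyMenger

open Matrix

variable {ι P V : Type*}

/-- The Euclidean distance matrix of a family of points, whose entries are the squared distances. -/
def sqDistMatrix [Dist P] (p : ι → P) : Matrix ι ι ℝ :=
  of fun i j ↦ dist (p i) (p j) ^ 2

/-- The Cayley–Menger matrix of a family of points: the matrix of squared distances, bordered by
a row and a column of ones that are indexed by `Sum.inr ()`. -/
def cayleyMengerMatrix [Dist P] (p : ι → P) : Matrix (ι ⊕ Unit) (ι ⊕ Unit) ℝ :=
  fromBlocks (sqDistMatrix p) (replicateCol Unit 1) (replicateRow Unit 1) 0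

/-- The determinant of the Cayley–Menger matrix of the family `p` with one more point, where `u i`
takes the place of the squared distance between the new point and `p i`. It is the polynomial `f_M`
for a family of any size. -/
def extendedCayleyMengerDet [Fintype ι] [DecidableEq ι] [Dist P] (p : ι → P) (u : ι → ℝ) : ℝ :=
  (fromBlocks 0 (replicateRow Unit (Sum.elim u 1)) (replicateCol Unit (Sum.elim u 1))
    (cayleyMengerMatrix p)).det

lemma dotProduct_sqDistMatrix_mulVec_of_sum_eq_zero [Fintype ι] [NormedAddCommGroup V]
    [InnerProductSpace ℝ V] [MetricSpace P] [NormedAddTorsor V P] (p : ι → P) {w : ι → ℝ}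
    (hw : ∑ i, w i = 0) :
    w ⬝ᵥ sqDistMatrix p *ᵥ w = -2 * ‖Finset.univ.weightedVSub p w‖ ^ 2 := by
  rw [← real_inner_self_eq_norm_sq, EuclideanGeometry.inner_weightedVSub p hw p hw]
  have form_eq_sum : w ⬝ᵥ sqDistMatrix p *ᵥ w =
      ∑ i, ∑ j, w i * w j * (dist (p i) (p j) * dist (p i) (p j)) := by
    simp only [dotProduct, mulVec, sqDistMatrix, of_apply, Finset.mul_sum]
    congr! 2
    ring
  linarith

variable [Fintype ι] [DecidableEq ι]

lemma adjugate_cayleyMengerMatrix_inl_inl [Dist P] (p : ι → P) (i : ι) :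
    (cayleyMengerMatrix p).adjugate (Sum.inl i) (Sum.inl i) =
      (cayleyMengerMatrix fun j : {j // j ≠ i} ↦ p j).det := by
  let e : {k : ι ⊕ Unit // k ≠ Sum.inl i} ≃ {j // j ≠ i} ⊕ Unit :=
    Equiv.subtypeSum.trans <| Equiv.sumCongr
      (Equiv.subtypeEquivRight fun _ ↦ Sum.inl_injective.ne_iff)
      (Equiv.subtypeUnivEquiv fun _ ↦ Sum.inr_ne_inl)
  rw [adjugate_apply_self_eq_det_submatrix, ← det_submatrix_equiv_self e.symm]
  congr 1
  ext (_ | _) (_ | _) <;> rfl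

lemma exists_extendedCayleyMengerDet_update_eq [Dist P] (p : ι → P) (u : ι → ℝ) (i : ι) :
    ∃ b c : ℝ, ∀ t, extendedCayleyMengerDet p (Function.update u i t) =
      -(cayleyMengerMatrix fun j : {j // j ≠ i} ↦ p j).det * t ^ 2 + b * t + c := by
  obtain ⟨b, c, form_update⟩ := exists_dotProduct_mulVec_update_eq
    (cayleyMengerMatrix p).adjugate (Sum.elim u 1) (Sum.inl i)
  refine ⟨-b, -c, fun t ↦ ?_⟩
  rw [extendedCayleyMengerDet, det_fromBlocks_zero_replicateRow_replicateCol,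
    ← Sum.update_elim_inl, form_update, adjugate_cayleyMengerMatrix_inl_inl]
  ring

lemma continuous_extendedCayleyMengerDet [Dist P] (p : ι → P) :
    Continuous (extendedCayleyMengerDet p) := by
  unfold extendedCayleyMengerDet
  simp only [det_fromBlocks_zero_replicateRow_replicateCol]
  have continuous_border : Continuous fun u : ι → ℝ ↦ (Sum.elim u 1 : ι ⊕ Unit → ℝ) :=
    continuous_pi fun k ↦ by cases k <;> dsimp only [Sum.elim_inl, Sum.elim_inr] <;> fun_prop
  fun_prop

variable [NormedAddCommGroup V] [InnerProductSpace ℝ V] [MetricSpace P] [NormedAddTorsor V P]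

lemma det_cayleyMengerMatrix_ne_zero [Nonempty ι] {p : ι → P}
    (hp : AffineIndependent ℝ p) : (cayleyMengerMatrix p).det ≠ 0 := by
  rw [Ne, ← exists_mulVec_eq_zero_iff]
  rintro ⟨v, hv, hker⟩
  set w := v ∘ Sum.inl
  have sum_eq_zero : ∑ i, w i = 0 := by
    simpa [w, cayleyMengerMatrix, fromBlocks_mulVec, mulVec, dotProduct] using
      congrFun hker (Sum.inr ())
  have mulVec_eq_const (i : ι) : (sqDistMatrix p *ᵥ w) i = -v (Sum.inr ()) := by
    rw [eq_neg_iff_add_eq_zero]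
    simpa [w, cayleyMengerMatrix, fromBlocks_mulVec, mulVec, dotProduct] using
      congrFun hker (Sum.inl i)
  have weightedVSub_eq_zero : Finset.univ.weightedVSub p w = (0 : V) := by
    have quadraticForm_eq_zero : w ⬝ᵥ sqDistMatrix p *ᵥ w = 0 := by
      simp [dotProduct, mulVec_eq_const, ← Finset.sum_mul, sum_eq_zero]
    simpa [dotProduct_sqDistMatrix_mulVec_of_sum_eq_zero p sum_eq_zero] using quadraticForm_eq_zero
  have w_eq_zero : w = 0 := funext <|
    (affineIndependent_iff_of_fintype ℝ p).1 hp w sum_eq_zero weightedVSub_eq_zero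
  refine hv <| funext (Sum.rec (congrFun w_eq_zero) fun _ ↦ ?_)
  simpa [w_eq_zero] using mulVec_eq_const (Classical.arbitrary ι)

lemma fM_eq_extendedCayleyMengerDet (m : Fin 4 → E3) : fM m = extendedCayleyMengerDet m := by
  ext u
  let e : Fin 6 ≃ Unit ⊕ (Fin 4 ⊕ Unit) :=
    { toFun := ![.inl (), .inr (.inl 0), .inr (.inl 1), .inr (.inl 2), .inr (.inl 3),
        .inr (.inr ())]
      invFun := Sum.elim (fun _ ↦ 0) (Sum.elim ![1, 2, 3, 4] fun _ ↦ 5)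
      left_inv := by decide
      right_inv := by decide }
  rw [extendedCayleyMengerDet, ← det_submatrix_equiv_self e, fM]
  congr 1
  ext i j
  fin_cases i <;> fin_cases j <;> simp [e, cayleyMengerMatrix, sqDistMatrix, dist_eq_norm]

end CayleyMenger

section NullSets

lemma measure_pi_eq_zero_of_forall_update {ι : Type*} [Fintype ι] [DecidableEq ι] {X : ι → Type*}
    [∀ i, MeasurableSpace (X i)] (μ : ∀ i, Measure (X i)) [∀ i, SigmaFinite (μ i)]
    {s : Set (∀ i, X i)} (hs : MeasurableSet s) (i : ι)
    (h : ∀ x, μ i {y | Function.update x i y ∈ s} = 0) : Measure.pi μ s = 0 := by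
  obtain _ | ⟨⟨x⟩⟩ := isEmpty_or_nonempty (∀ i, X i)
  · simp [Set.eq_empty_of_isEmpty s]
  have indicator_update (x : ∀ i, X i) (y : X i) : s.indicator (1 : (∀ i, X i) → ENNReal)
      (Function.update x i y) = {y | Function.update x i y ∈ s}.indicator 1 y := rfl
  have slice_measurable (x : ∀ i, X i) : MeasurableSet {y | Function.update x i y ∈ s} :=
    measurable_update x hs
  rw [← lintegral_indicator_one hs, lintegral_eq_lmarginal_univ x,
    lmarginal_erase' _ (measurable_one.indicator hs) (Finset.mem_univ i)]
  simp only [indicator_update, lintegral_indicator_one (slice_measurable _), h]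
  simp [lmarginal]

lemma addHaar_setOf_norm_sub_sq_mem_eq_zero {E : Type*} [NormedAddCommGroup E] [NormedSpace ℝ E]
    [FiniteDimensional ℝ E] [Nontrivial E] [MeasurableSpace E] [BorelSpace E] (μ : Measure E)
    [μ.IsAddHaarMeasure] (x : E) {T : Set ℝ} (hT : T.Countable) :
    μ {y | ‖y - x‖ ^ 2 ∈ T} = 0 := by
  have subset_spheres : {y | ‖y - x‖ ^ 2 ∈ T} ⊆ ⋃ t ∈ T, Metric.sphere x √t := fun y hy ↦
    Set.mem_biUnion hy (by simp)
  exact measure_mono_null subset_spheres <|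
    (measure_biUnion_null_iff hT).2 fun t _ ↦ Measure.addHaar_sphere μ x √t

lemma finite_setOf_quadratic_eq_zero {R : Type*} [CommRing R] [IsDomain R] {a : R} (ha : a ≠ 0)
    (b c : R) : {t : R | a * t ^ 2 + b * t + c = 0}.Finite := by
  open Polynomial in
  have quadratic_ne_zero : C a * X ^ 2 + C b * X + C c ≠ 0 := by
    intro h
    simpa [h] using natDegree_quadratic (b := b) (c := c) ha
  simpa [Polynomial.IsRoot] using Polynomial.finite_setOfPred_isRoot quadratic_ne_zero

end NullSets

theorem bad_mirror_point_tuples_measure_zero_general {ι E : Type*} [Fintype ι] [DecidableEq ι]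
    [Nontrivial ι] [NormedAddCommGroup E] [InnerProductSpace ℝ E] [FiniteDimensional ℝ E]
    [Nontrivial E] [MeasurableSpace E] [BorelSpace E] (m : ι → E) (i : ι)
    (hm : AffineIndependent ℝ fun j : {j // j ≠ i} ↦ m j) :
    volume {s : ι → E | extendedCayleyMengerDet m (fun j ↦ ‖s j - m j‖ ^ 2) = 0} = 0 := by
  have isClosed_zeros : IsClosed {s : ι → E |
      extendedCayleyMengerDet m (fun j ↦ ‖s j - m j‖ ^ 2) = 0} :=
    isClosed_eq ((continuous_extendedCayleyMengerDet m).comp (by fun_prop)) continuous_const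
  refine measure_pi_eq_zero_of_forall_update _ isClosed_zeros.measurableSet i fun s ↦ ?_
  obtain ⟨b, c, det_update⟩ :=
    exists_extendedCayleyMengerDet_update_eq m (fun j ↦ ‖s j - m j‖ ^ 2) i
  have : Nonempty {j // j ≠ i} := nonempty_subtype.2 (exists_ne i)
  have leading_coeff_ne_zero := neg_ne_zero.2 (det_cayleyMengerMatrix_ne_zero hm)
  simp only [Set.mem_ofPred_eq, Function.apply_update (fun j y ↦ ‖y - m j‖ ^ 2), det_update]
  exact addHaar_setOf_norm_sub_sq_mem_eq_zero volume (m i)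
    (finite_setOf_quadratic_eq_zero leading_coeff_ne_zero b c).countable

/-- For fixed non-coplanar microphones, the set of tuples of mirror points
`(s₁,…,s₄) ∈ (ℝ³)⁴ ≅ ℝ¹²` that are not all equal and satisfy the echo sorting
criterion `f_M(‖sᵢ - mᵢ‖²) = 0` has Lebesgue measure zero. -/
theorem bad_mirror_point_tuples_measure_zero (m : Fin 4 → E3)
    (hm : AffineIndependent ℝ m) :
    volume {s : Fin 4 → E3 |
      (¬ ∀ i j, s i = s j) ∧ fM m (fun i => ‖s i - m i‖ ^ 2) = 0} = 0 := by
  rw [fM_eq_extendedCayleyMengerDet]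
  exact measure_mono_null (fun s hs ↦ hs.2)
    (bad_mirror_point_tuples_measure_zero_general m 0 (hm.comp_embedding (.subtype _)))

end
end
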